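/- Let S be a complete c-semiring, Σ an alphabet, and A, X, Y : List Σ → S formal power series. Then (X, Y) is a factorization of A if and only if X = A/Y and Y = X\A. -/

import Mathlib

/-!
The inequality `cauchy X Y ≤ A` holds iff `X u * Y v ≤ A (u ++ v)` for all words `u`, `v`
(`cauchy_le_iff`). Since multiplication in `S` distributes over suprema, both residuals are attained
as greatest solutions, giving the adjunctions
`Y ≤ lres X A ↔ cauchy X Y ≤ A ↔ X ≤ rres A Y` (`le_lres_iff`, `le_rres_iff`).
If `(X, Y)` is maximal, then replacing one component by the corresponding residual enlarges it and
keeps the product below `A`, so nothing changes. Conversely, if `X` and `Y` are each other's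
residuals and `(X', Y')` is a larger pair with product below `A`, then `cauchy X' Y ≤ A` and
`cauchy X Y' ≤ A` by monotonicity, so the adjunctions give `X' ≤ X` and `Y' ≤ Y`.
-/

/-- A complete c-semiring: a complete lattice with a commutative monoid
multiplication distributing over arbitrary suprema, whose unit is the top element.
Addition is join, zero is `⊥`, infinitary sums are suprema. -/
class CompleteCSemiring (S : Type*) extends CompleteLattice S, CommMonoid S where
  mul_sSup : ∀ (a : S) (s : Set S), a * sSup s = ⨆ b ∈ s, a * b
  one_eq_top : (1 : S) = ⊤

namespace FPS

open Classical
noncomputable section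

variable {S : Type*} [CompleteCSemiring S] {α : Type*}

/-- Cauchy product of formal power series. -/
def cauchy (A B : List α → S) : List α → S :=
  fun w => ⨆ (u : List α) (v : List α) (_ : u ++ v = w), A u * B v

/-- Left quotient of `A` by the series `X`. -/
def lquot (X A : List α → S) : List α → S := fun v => ⨆ u : List α, X u * A (u ++ v)

/-- Right quotient of `A` by the series `Y`. -/
def rquot (A Y : List α → S) : List α → S := fun v => ⨆ u : List α, A (v ++ u) * Y u

/-- Left residual `X \ A`. -/
def lres (X A : List α → S) : List α → S := sSup {Z | cauchy X Z ≤ A}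

/-- Right residual `A / Y`. -/
def rres (A Y : List α → S) : List α → S := sSup {Z | cauchy Z Y ≤ A}

/-- Residual in the semiring `S`: `a ⇨ b`. -/
def resid (a b : S) : S := sSup {x | a * x ≤ b}

/-- Inclusion degree of the series `f` into `g`. -/
def incl (f g : List α → S) : S := ⨅ u : List α, resid (f u) (g u)

/-- A word viewed as a series: `1` at `u` and `⊥` elsewhere. -/
def wordSeries (u : List α) : List α → S := fun w => if w = u then 1 else ⊥

/-- Reversal of a series. -/
def rev (A : List α → S) : List α → S := fun w => A w.reverse

/-- Extended transition map of a weighted automaton. -/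
def deltaStar {Q : Type*} (δ : Q → α → Q → S) : Q → List α → Q → S
  | q, [], p => ⨆ _ : q = p, 1
  | q, a :: w, p => ⨆ r : Q, δ q a r * deltaStar δ r w p

/-- Behaviour of a weighted automaton. -/
def behavior {Q : Type*} (δ : Q → α → Q → S) (I F : Q → S) : List α → S :=
  fun w => ⨆ (p : Q) (q : Q), I p * deltaStar δ p w q * F q

/-- Past of a state of a weighted automaton. -/
def past {Q : Type*} (δ : Q → α → Q → S) (I : Q → S) (q : Q) : List α → S :=
  fun w => ⨆ p : Q, I p * deltaStar δ p w q

/-- Future of a state of a weighted automaton. -/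
def fut {Q : Type*} (δ : Q → α → Q → S) (F : Q → S) (q : Q) : List α → S :=
  fun w => ⨆ p : Q, deltaStar δ q w p * F p

/-- A series is DWA-regular if it is recognized by a finite deterministic
weighted automaton. -/
def DWARegular (A : List α → S) : Prop :=
  ∃ (Q : Type) (_ : Fintype Q) (δ : Q → α → Q) (q0 : Q) (F : Q → S),
    ∀ w : List α, A w = F (w.foldl δ q0)

/-- A series is regular if it is the behaviour of a finite weighted automaton. -/
def Regular (A : List α → S) : Prop :=
  ∃ (Q : Type) (_ : Fintype Q) (δ : Q → α → Q → S) (I F : Q → S),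
    behavior δ I F = A

/-- `(X, Y)` is a factorization of `A`. -/
def IsFactorization (A X Y : List α → S) : Prop :=
  cauchy X Y ≤ A ∧
    ∀ X' Y' : List α → S, X ≤ X' → Y ≤ Y' → cauchy X' Y' ≤ A → X' = X ∧ Y' = Y

/-- The set of factorizations of `A` (states of the universal weighted automaton). -/
def Fact (A : List α → S) := {p : (List α → S) × (List α → S) // IsFactorization A p.1 p.2}

/-- Initial weights of the universal weighted automaton. -/
def JA (A : List α → S) (p : Fact A) : S := p.1.1 []

/-- Final weights of the universal weighted automaton. -/
def GA (A : List α → S) (p : Fact A) : S := p.1.2 []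

/-- Transition weights of the universal weighted automaton. -/
def etaA (A : List α → S) (p : Fact A) (σ : α) (q : Fact A) : S :=
  incl (cauchy (cauchy p.1.1 (wordSeries [σ])) q.1.2) A

/-- The relation `u ≡_A v`. -/
def eqA (A : List α → S) : Setoid (List α) where
  r u v := ∀ w, A (u ++ w) = A (v ++ w)
  iseqv := ⟨fun _ _ => rfl, fun h w => (h w).symm, fun h1 h2 w => (h1 w).trans (h2 w)⟩

end

end FPS

namespace FPS

variable {S : Type*} [CompleteCSemiring S] {α : Type*}

lemma mul_sSup_le_iff (a c : S) (s : Set S) : a * sSup s ≤ c ↔ ∀ b ∈ s, a * b ≤ c := by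
  rw [CompleteCSemiring.mul_sSup, iSup₂_le_iff]

lemma mul_le_mul_left_of_le (a : S) {b c : S} (h : b ≤ c) : a * b ≤ a * c := by
  -- monotonicity is distributivity over the two-element set `{b, c}`, whose supremum is `c`
  have hc : sSup {b, c} = c := by rw [sSup_pair, sup_eq_right.2 h]
  have := (mul_sSup_le_iff a (a * c) {b, c}).1 (by rw [hc])
  exact this b (Set.mem_insert b {c})

lemma mul_le_mul_of_le {a a' b b' : S} (ha : a ≤ a') (hb : b ≤ b') : a * b ≤ a' * b' := by
  refine (mul_le_mul_left_of_le a hb).trans ?_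
  rw [mul_comm a, mul_comm a']
  exact mul_le_mul_left_of_le b' ha

lemma cauchy_le_iff {X Y A : List α → S} :
    cauchy X Y ≤ A ↔ ∀ u v, X u * Y v ≤ A (u ++ v) := by
  simp only [Pi.le_def, cauchy, iSup_le_iff]
  exact ⟨fun h u v => h _ u v rfl, fun h w u v e => e ▸ h u v⟩

lemma cauchy_mono {X X' Y Y' : List α → S} (hX : X ≤ X') (hY : Y ≤ Y') :
    cauchy X Y ≤ cauchy X' Y' :=
  cauchy_le_iff.2 fun u v =>
    (mul_le_mul_of_le (hX u) (hY v)).trans (cauchy_le_iff.1 le_rfl u v)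

lemma cauchy_lres_le (X A : List α → S) : cauchy X (lres X A) ≤ A := by
  refine cauchy_le_iff.2 fun u v => ?_
  rw [lres, sSup_apply_eq_sSup_image, mul_sSup_le_iff]
  rintro _ ⟨Z, hZ, rfl⟩
  exact cauchy_le_iff.1 hZ u v

lemma cauchy_rres_le (A Y : List α → S) : cauchy (rres A Y) Y ≤ A := by
  refine cauchy_le_iff.2 fun u v => ?_
  rw [rres, sSup_apply_eq_sSup_image, mul_comm, mul_sSup_le_iff]
  rintro _ ⟨Z, hZ, rfl⟩
  rw [mul_comm]
  exact cauchy_le_iff.1 hZ u v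

lemma le_lres_iff {X Y A : List α → S} : Y ≤ lres X A ↔ cauchy X Y ≤ A :=
  ⟨fun h => (cauchy_mono le_rfl h).trans (cauchy_lres_le X A), fun h => le_sSup h⟩

lemma le_rres_iff {X Y A : List α → S} : X ≤ rres A Y ↔ cauchy X Y ≤ A :=
  ⟨fun h => (cauchy_mono h le_rfl).trans (cauchy_rres_le A Y), fun h => le_sSup h⟩

end FPS

open FPS in
/-- `(X, Y)` is a factorization of `A` iff `X = A / Y` and
`Y = X \\ A`. -/
theorem factorization_iff_residuals {S : Type*} [CompleteCSemiring S] {α : Type*}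
    (A X Y : List α → S) :
    IsFactorization A X Y ↔ (X = rres A Y ∧ Y = lres X A) := by
  constructor
  · rintro ⟨h, hmax⟩
    exact ⟨(hmax _ _ (le_rres_iff.2 h) le_rfl (cauchy_rres_le A Y)).1.symm,
      (hmax _ _ le_rfl (le_lres_iff.2 h) (cauchy_lres_le X A)).2.symm⟩
  · rintro ⟨hX, hY⟩
    refine ⟨le_rres_iff.1 hX.le, fun X' Y' hXX' hYY' h => ⟨?_, ?_⟩⟩
    · exact le_antisymm
        ((le_rres_iff.2 ((cauchy_mono le_rfl hYY').trans h)).trans hX.ge) hXX'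
    · exact le_antisymm
        ((le_lres_iff.2 ((cauchy_mono hXX' le_rfl).trans h)).trans hY.ge) hYY'
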